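/- arXiv:math/0207098 — 4 statements merged into one kernel-verified Lean document; each statement's English description precedes it below -/
import Mathlib

section
/- Let K be a field and f ∈ K[[X_1,…,X_n]] a formal power series of order exactly d, i.e., the coefficient of f at every exponent of total degree < d vanishes and some coefficient of f at an exponent of total degree d is nonzero. Then for every l ∈ ℕ, the quotient K[[X_1,…,X_n]]/((f) + m_{l+1}) is a finite-dimensional K-vector space of dimension binomial(n+l, n) − binomial(n+l−d, n), with the convention that binomial(a, b) = 0 when a < b. -/
/-- Total degree of an exponent. -/
def expDegree {σ : Type*} (e : σ →₀ ℕ) : ℕ := e.sum fun _ v => v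

/-- The ideal `m_k` of formal power series whose coefficients vanish at
every exponent of total degree `< k`. -/
def mIdl (K : Type*) [Field K] (σ : Type*) (k : ℕ) :
    Ideal (MvPowerSeries σ K) where
  carrier := {f | ∀ e : σ →₀ ℕ, expDegree e < k → MvPowerSeries.coeff e f = 0}
  add_mem' := by
    intro a b ha hb e he
    simp only [Set.mem_setOf_eq] at *
    rw [map_add, ha e he, hb e he, add_zero]
  zero_mem' := by
    intro e _
    simp
  smul_mem' := by
    classical
    intro c f hf e he
    simp only [Set.mem_setOf_eq] at *
    rw [smul_eq_mul, MvPowerSeries.coeff_mul]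
    refine Finset.sum_eq_zero fun p hp => ?_
    rw [Finset.HasAntidiagonal.mem_antidiagonal] at hp
    have hdeg : expDegree e = expDegree p.1 + expDegree p.2 := by
      rw [← hp]
      exact Finsupp.sum_add_index' (fun _ => rfl) (fun _ _ _ => rfl)
    rw [hf p.2 (by omega), mul_zero]


/-- The finset of exponents of total degree `< k`. -/
noncomputable def expLT (n k : ℕ) : Finset (Fin n →₀ ℕ) :=
  (Finset.range k).biUnion fun i => Finset.finsuppAntidiag Finset.univ i

theorem expDegree_eq_degree {n : ℕ} (e : Fin n →₀ ℕ) : expDegree e = e.degree := rfl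

theorem mem_expLT {n k : ℕ} (e : Fin n →₀ ℕ) : e ∈ expLT n k ↔ expDegree e < k := by
  simp [expLT, Finset.mem_finsuppAntidiag, expDegree_eq_degree, Finsupp.degree_eq_sum]

theorem card_expLT (n k : ℕ) : (expLT n k).card = ∑ i ∈ Finset.range k, n.multichoose i := by
  unfold expLT
  rw [Finset.card_biUnion]
  · refine Finset.sum_congr rfl fun i _ => ?_
    rw [Finset.card_finsuppAntidiag_nat_eq_multichoose]; simp
  · intro i _ j _ hij
    rw [Function.onFun, Finset.disjoint_left]
    intro e he he'
    rw [Finset.mem_finsuppAntidiag] at he he'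
    exact hij (he.1.symm.trans he'.1)

theorem card_expLT_succ (n l : ℕ) : (expLT n (l + 1)).card = (n + l).choose n := by
  rw [card_expLT, Nat.sum_range_multichoose, Nat.add_comm]

/-- Truncation. -/
noncomputable def truncLT (K : Type*) [Field K] (n k : ℕ) :
    MvPowerSeries (Fin n) K →ₗ[K] (expLT n k → K) :=
  LinearMap.pi fun e => MvPowerSeries.coeff e.1

theorem truncLT_ker {K : Type*} [Field K] {n k : ℕ} (g : MvPowerSeries (Fin n) K) :
    truncLT K n k g = 0 ↔ g ∈ mIdl K (Fin n) k := by
  constructor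
  · intro h e he
    exact congrFun h ⟨e, (mem_expLT e).2 he⟩
  · intro h
    funext e
    exact h e.1 ((mem_expLT e.1).1 e.2)

theorem truncLT_surj (K : Type*) [Field K] (n k : ℕ) :
    Function.Surjective (truncLT K n k) := by
  classical
  intro v
  refine ⟨fun e => if h : e ∈ expLT n k then v ⟨e, h⟩ else 0, ?_⟩
  funext e
  change (if h : e.1 ∈ expLT n k then v ⟨e.1, h⟩ else 0) = v e
  rw [dif_pos e.2]

theorem mem_mIdl_iff_order {K : Type*} [Field K] {n k : ℕ} (g : MvPowerSeries (Fin n) K) :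
    g ∈ mIdl K (Fin n) k ↔ (k : ℕ∞) ≤ g.order := by
  constructor
  · intro h
    exact MvPowerSeries.nat_le_order h
  · intro h e he
    exact MvPowerSeries.coeff_of_lt_order (lt_of_lt_of_le (by exact_mod_cast he) h)

theorem mul_mem_mIdl_iff {K : Type*} [Field K] {n d k : ℕ} (f g : MvPowerSeries (Fin n) K)
    (hf : f.order = d) : f * g ∈ mIdl K (Fin n) k ↔ g ∈ mIdl K (Fin n) (k - d) := by
  rw [mem_mIdl_iff_order, mem_mIdl_iff_order, MvPowerSeries.order_mul, hf]
  cases h : g.order with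
  | top => simp
  | coe m => norm_cast; omega

theorem stmt_10 {K : Type*} [Field K] {n : ℕ}
    (f : MvPowerSeries (Fin n) K) (d : ℕ)
    (hlow : ∀ e : Fin n →₀ ℕ, expDegree e < d → MvPowerSeries.coeff e f = 0)
    (hd : ∃ e : Fin n →₀ ℕ, expDegree e = d ∧ MvPowerSeries.coeff e f ≠ 0)
    (l : ℕ) :
    Module.Finite K
      (MvPowerSeries (Fin n) K ⧸ (Ideal.span {f} ⊔ mIdl K (Fin n) (l + 1))) ∧
    Module.finrank K
      (MvPowerSeries (Fin n) K ⧸ (Ideal.span {f} ⊔ mIdl K (Fin n) (l + 1)))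
      = (n + l).choose n - (n + l - d).choose n := by
  have hf : f.order = d := by
    apply le_antisymm
    · obtain ⟨e, he, hne⟩ := hd
      rw [← he]
      exact MvPowerSeries.order_le hne
    · exact MvPowerSeries.nat_le_order hlow
  set I := Ideal.span {f} ⊔ mIdl K (Fin n) (l + 1) with hI
  let T := truncLT K n (l + 1)
  let φ : MvPowerSeries (Fin n) K →ₗ[K] (expLT n (l + 1) → K) :=
    T ∘ₗ LinearMap.mulLeft K f
  let U := LinearMap.range φ
  let π : MvPowerSeries (Fin n) K →ₗ[K] ((expLT n (l + 1) → K) ⧸ U) := U.mkQ ∘ₗ T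
  have hπ : Function.Surjective π := (Submodule.mkQ_surjective U).comp (truncLT_surj K n (l + 1))
  have hker : LinearMap.ker π = I.restrictScalars K := by
    ext g
    rw [LinearMap.mem_ker, Submodule.restrictScalars_mem]
    change U.mkQ (T g) = 0 ↔ _
    rw [Submodule.mkQ_apply, Submodule.Quotient.mk_eq_zero, hI, Submodule.mem_sup]
    constructor
    · rintro ⟨a, ha⟩
      refine ⟨f * a, Ideal.mem_span_singleton.2 (dvd_mul_right _ _), g - f * a, ?_, by ring⟩
      rw [← truncLT_ker, map_sub, sub_eq_zero]
      exact ha.symm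
    · rintro ⟨y, hy, z, hz, rfl⟩
      obtain ⟨a, rfl⟩ := Ideal.mem_span_singleton.1 hy
      refine ⟨a, ?_⟩
      change T (f * a) = T (f * a + z)
      rw [map_add, (truncLT_ker z).2 hz, add_zero]
  have e1 : (MvPowerSeries (Fin n) K ⧸ I) ≃ₗ[K] ((expLT n (l + 1) → K) ⧸ U) :=
    (Submodule.Quotient.restrictScalarsEquiv K I).symm ≪≫ₗ
      (Submodule.quotEquivOfEq _ _ hker.symm) ≪≫ₗ π.quotKerEquivOfSurjective hπ
  have hkφ : LinearMap.ker φ = LinearMap.ker (truncLT K n (l + 1 - d)) := by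
    ext g
    rw [LinearMap.mem_ker, LinearMap.mem_ker, truncLT_ker, ← mul_mem_mIdl_iff f g hf, ← truncLT_ker]
    rfl
  have e2 : U ≃ₗ[K] (expLT n (l + 1 - d) → K) :=
    φ.quotKerEquivRange.symm ≪≫ₗ (Submodule.quotEquivOfEq _ _ hkφ) ≪≫ₗ
      (truncLT K n (l + 1 - d)).quotKerEquivOfSurjective (truncLT_surj K n _)
  refine ⟨Module.Finite.equiv e1.symm, ?_⟩
  rw [e1.finrank_eq, Submodule.finrank_quotient, e2.finrank_eq, Module.finrank_fintype_fun_eq_card,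
    Module.finrank_fintype_fun_eq_card, Fintype.card_coe, Fintype.card_coe, card_expLT_succ]
  congr 1
  by_cases hdl : d ≤ l
  · rw [show l + 1 - d = (l - d) + 1 by omega, card_expLT_succ, Nat.add_sub_assoc hdl]
  · have hn : 0 < n := by
      rcases Nat.eq_zero_or_pos n with rfl | h
      · obtain ⟨e, he, -⟩ := hd
        have : e = 0 := Subsingleton.elim _ _
        subst this
        simp [expDegree] at he
        omega
      · exact h
    rw [show l + 1 - d = 0 by omega, Nat.choose_eq_zero_of_lt (by omega)]
    simp [expLT]
end

section
/- Let K be a field, R = K[[u_1,…,u_m, v_1,…,v_r]], and π : R → R the K-algebra endomorphism setting u = 0, i.e., the coefficient of π(f) at an exponent (β,γ) equals the coefficient of f at (0,γ) if β = 0, and 0 otherwise. Let J be an ideal of R and let J_0 be the ideal of R generated by {π(f) : f ∈ J}. Then for every k ∈ ℕ, both R/(J + m_{k+1}) and R/(J_0 + m_{k+1}) are finite-dimensional K-vector spaces, and dim_K R/(J + m_{k+1}) ≤ dim_K R/(J_0 + m_{k+1}). That is, the Hilbert–Samuel function of R/J_0 majorizes the Hilbert–Samuel function of R/J. -/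
/-- Degree in the `u` variables. -/
def uDeg {m r : ℕ} (e : Fin m ⊕ Fin r →₀ ℕ) : ℕ := ∑ i : Fin m, e (Sum.inl i)

theorem uDeg_add {m r : ℕ} (e f : Fin m ⊕ Fin r →₀ ℕ) : uDeg (e + f) = uDeg e + uDeg f := by
  simp [uDeg, Finset.sum_add_distrib]

theorem uDeg_eq_zero {m r : ℕ} (e : Fin m ⊕ Fin r →₀ ℕ) :
    uDeg e = 0 ↔ ∀ i : Fin m, e (Sum.inl i) = 0 := by
  simp [uDeg]

theorem uDeg_le {m r : ℕ} (e : Fin m ⊕ Fin r →₀ ℕ) : uDeg e ≤ expDegree e := by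
  have h : expDegree e = ∑ i, e i := Finsupp.sum_fintype _ _ (fun _ => rfl)
  rw [h, Fintype.sum_sum_type]
  exact Nat.le_add_right _ _

theorem key_lift {K : Type*} [Field K] {m r : ℕ}
    (π : MvPowerSeries (Fin m ⊕ Fin r) K →ₐ[K] MvPowerSeries (Fin m ⊕ Fin r) K)
    (hπ : ∀ (f : MvPowerSeries (Fin m ⊕ Fin r) K) (e : Fin m ⊕ Fin r →₀ ℕ),
      MvPowerSeries.coeff e (π f) =
        if ∀ i : Fin m, e (Sum.inl i) = 0 then MvPowerSeries.coeff e f else 0)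
    (J : Ideal (MvPowerSeries (Fin m ⊕ Fin r) K)) (d : ℕ)
    (h : MvPowerSeries (Fin m ⊕ Fin r) K)
    (hh : h ∈ Ideal.span (⇑π '' (J : Set (MvPowerSeries (Fin m ⊕ Fin r) K)))) :
    ∃ f ∈ J, (∀ e, uDeg e < d → MvPowerSeries.coeff e f = 0) ∧
      ∀ e, uDeg e = d → MvPowerSeries.coeff e f = MvPowerSeries.coeff e h := by
  classical
  refine Submodule.closure_induction (p := fun h _ => ∃ f ∈ J, (∀ e, uDeg e < d → MvPowerSeries.coeff e f = 0) ∧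
      ∀ e, uDeg e = d → MvPowerSeries.coeff e f = MvPowerSeries.coeff e h) ?_ ?_ ?_ hh
  · exact ⟨0, J.zero_mem, by simp, by simp⟩
  · rintro x y _ _ ⟨f, hf, hf1, hf2⟩ ⟨g, hg, hg1, hg2⟩
    refine ⟨f + g, J.add_mem hf hg, fun e he => ?_, fun e he => ?_⟩
    · rw [map_add, hf1 e he, hg1 e he, add_zero]
    · rw [map_add, map_add, hf2 e he, hg2 e he]
  · rintro a _ ⟨g, hg, rfl⟩
    let b : MvPowerSeries (Fin m ⊕ Fin r) K :=
      fun e => if uDeg e = d then MvPowerSeries.coeff e a else 0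
    have hb : ∀ e, MvPowerSeries.coeff e b =
        if uDeg e = d then MvPowerSeries.coeff e a else 0 := fun e => rfl
    refine ⟨b * g, J.mul_mem_left _ hg, fun e he => ?_, fun e he => ?_⟩
    · rw [MvPowerSeries.coeff_mul]
      refine Finset.sum_eq_zero fun p hp => ?_
      rw [Finset.HasAntidiagonal.mem_antidiagonal] at hp
      have := uDeg_add p.1 p.2
      rw [hp] at this
      rw [hb, if_neg (by omega), zero_mul]
    · rw [smul_eq_mul, MvPowerSeries.coeff_mul, MvPowerSeries.coeff_mul]
      refine Finset.sum_congr rfl fun p hp => ?_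
      rw [Finset.HasAntidiagonal.mem_antidiagonal] at hp
      have := uDeg_add p.1 p.2
      rw [hp] at this
      rw [hb, hπ]
      by_cases hq : uDeg p.2 = 0
      · rw [if_pos (by omega), if_pos ((uDeg_eq_zero _).1 hq)]
      · rw [if_neg (by omega), if_neg (fun h => hq ((uDeg_eq_zero _).2 h)), zero_mul, mul_zero]

theorem filt_step {K V : Type*} [Field K] [AddCommGroup V] [Module K V] [FiniteDimensional K V]
    (W F G : Submodule K V) (hGF : G ≤ F) :
    Module.finrank K ↥(W ⊓ F) =
      Module.finrank K ↥((W ⊓ F).map G.mkQ) + Module.finrank K ↥(W ⊓ G) := by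
  have h := LinearMap.finrank_range_add_finrank_ker (G.mkQ.domRestrict (W ⊓ F))
  rw [← h, LinearMap.range_domRestrict]
  congr 1
  have e : (LinearMap.ker (G.mkQ.domRestrict (W ⊓ F))).map (W ⊓ F).subtype = W ⊓ G := by
    ext x
    simp only [Submodule.mem_map, LinearMap.mem_ker, LinearMap.domRestrict_apply,
      Submodule.mkQ_apply, Submodule.Quotient.mk_eq_zero, Submodule.subtype_apply,
      Subtype.exists, Submodule.mem_inf]
    constructor
    · rintro ⟨a, ha, hb, rfl⟩
      exact ⟨ha.1, hb⟩
    · rintro ⟨h1, h2⟩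
      exact ⟨x, ⟨h1, hGF h2⟩, h2, rfl⟩
  rw [← e]
  exact (Submodule.equivMapOfInjective _ (W ⊓ F).injective_subtype _).finrank_eq

theorem filt_le {K V : Type*} [Field K] [AddCommGroup V] [Module K V] [FiniteDimensional K V]
    (W W0 : Submodule K V) (F : ℕ → Submodule K V) (hF : ∀ d, F (d + 1) ≤ F d)
    (N : ℕ) (h0 : F 0 = ⊤) (hN : F N = ⊥)
    (H : ∀ d, ∀ w0 ∈ W0, w0 ∈ F d → ∃ w ∈ W, w ∈ F d ∧ w - w0 ∈ F (d + 1)) :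
    Module.finrank K W0 ≤ Module.finrank K W := by
  have key : ∀ j d, d + j = N →
      Module.finrank K ↥(W0 ⊓ F d) ≤ Module.finrank K ↥(W ⊓ F d) := by
    intro j
    induction j with
    | zero =>
      intro d hd
      obtain rfl : d = N := hd
      rw [hN, inf_bot_eq, inf_bot_eq]
    | succ j ih =>
      intro d hd
      rw [filt_step W0 (F d) (F (d + 1)) (hF d), filt_step W (F d) (F (d + 1)) (hF d)]
      refine Nat.add_le_add (Submodule.finrank_mono ?_) (ih (d + 1) (by omega))
      rintro _ ⟨w0, ⟨hw0, hw0'⟩, rfl⟩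
      obtain ⟨w, hw, hw', hs⟩ := H d w0 hw0 hw0'
      exact ⟨w, ⟨hw, hw'⟩, (Submodule.Quotient.eq _).2 hs⟩
  have := key N 0 (by omega)
  rwa [h0, inf_top_eq, inf_top_eq] at this

theorem finite_exp (σ : Type*) [Finite σ] (k : ℕ) :
    Finite {e : σ →₀ ℕ // expDegree e ≤ k} := by
  exact (Finsupp.finite_of_degree_le (σ := σ) k).to_subtype

/-- Truncation. -/
def trunk (K : Type*) [Field K] (σ : Type*) (k : ℕ) :
    MvPowerSeries σ K →ₗ[K] ({e : σ →₀ ℕ // expDegree e ≤ k} → K) :=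
  LinearMap.pi fun e => MvPowerSeries.coeff e.1

theorem trunk_apply (K : Type*) [Field K] (σ : Type*) (k : ℕ) (f : MvPowerSeries σ K)
    (e : {e : σ →₀ ℕ // expDegree e ≤ k}) : trunk K σ k f e = MvPowerSeries.coeff e.1 f := rfl

theorem trunk_surj (K : Type*) [Field K] (σ : Type*) (k : ℕ) :
    Function.Surjective (trunk K σ k) := by
  classical
  intro v
  refine ⟨fun e => if h : expDegree e ≤ k then v ⟨e, h⟩ else 0, ?_⟩
  funext e
  exact dif_pos e.2

theorem trunk_eq_zero (K : Type*) [Field K] (σ : Type*) (k : ℕ) (f : MvPowerSeries σ K) :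
    trunk K σ k f = 0 ↔ f ∈ mIdl K σ (k + 1) := by
  constructor
  · intro h e he
    exact congrFun h ⟨e, Nat.lt_succ_iff.1 he⟩
  · intro h
    funext e
    exact h e.1 (Nat.lt_succ_iff.2 e.2)

theorem quot_equiv (K : Type*) [Field K] (σ : Type*) (k : ℕ) (I : Ideal (MvPowerSeries σ K)) :
    Nonempty ((MvPowerSeries σ K ⧸ (I ⊔ mIdl K σ (k + 1))) ≃ₗ[K]
      (({e : σ →₀ ℕ // expDegree e ≤ k} → K) ⧸ (I.restrictScalars K).map (trunk K σ k))) := by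
  let f := (Ideal.Quotient.mkₐ K (I ⊔ mIdl K σ (k + 1))).toLinearMap
  let g := ((I.restrictScalars K).map (trunk K σ k)).mkQ ∘ₗ trunk K σ k
  have hf : Function.Surjective f := Ideal.Quotient.mk_surjective
  have hg : Function.Surjective g := (Submodule.mkQ_surjective _).comp (trunk_surj K σ k)
  have hk : LinearMap.ker f = LinearMap.ker g := by
    ext x
    have h1 : x ∈ LinearMap.ker f ↔ x ∈ I ⊔ mIdl K σ (k + 1) := Ideal.Quotient.eq_zero_iff_mem
    have h2 : x ∈ LinearMap.ker g ↔ trunk K σ k x ∈ (I.restrictScalars K).map (trunk K σ k) :=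
      Submodule.Quotient.mk_eq_zero _
    rw [h1, h2, Submodule.mem_sup]
    constructor
    · rintro ⟨y, hy, z, hz, rfl⟩
      refine ⟨y, hy, ?_⟩
      rw [map_add, (trunk_eq_zero K σ k z).2 hz, add_zero]
    · rintro ⟨y, hy, hxy⟩
      refine ⟨y, hy, x - y, (trunk_eq_zero K σ k _).1 ?_, by ring⟩
      rw [map_sub, hxy, sub_self]
  exact ⟨(f.quotKerEquivOfSurjective hf).symm ≪≫ₗ Submodule.quotEquivOfEq _ _ hk ≪≫ₗ
    g.quotKerEquivOfSurjective hg⟩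

/-- The `u`-adic filtration. -/
def uFilt (K : Type*) [Field K] (m r k d : ℕ) :
    Submodule K ({e : Fin m ⊕ Fin r →₀ ℕ // expDegree e ≤ k} → K) where
  carrier := {v | ∀ e, uDeg e.1 < d → v e = 0}
  add_mem' := by
    intro a b ha hb e he
    rw [Pi.add_apply, ha e he, hb e he, add_zero]
  zero_mem' := fun _ _ => rfl
  smul_mem' := by
    intro c a ha e he
    rw [Pi.smul_apply, ha e he, smul_zero]

/-- **The Hilbert–Samuel function of the fibre majorizes that of the total
space (part (a) of the proof of Theorem 6.18 of Bierstone–Milman,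
"Desingularization algorithms I").**
Let `R = K[[u₁,…,u_m, v₁,…,v_r]]` and `π : R → R` the `K`-algebra
endomorphism setting `u = 0` (the coefficient of `π(f)` at `(β,γ)` is the
coefficient of `f` at `(0,γ)` if `β = 0`, and `0` otherwise).  Let `J` be
an ideal and `J₀` the ideal generated by `π(J)`.  Then for every `k`,
both `R/(J + m^{k+1})` and `R/(J₀ + m^{k+1})` are finite-dimensional over
`K` and `dim R/(J + m^{k+1}) ≤ dim R/(J₀ + m^{k+1})`. -/
theorem stmt_12 {K : Type*} [Field K] {m r : ℕ}
    (π : MvPowerSeries (Fin m ⊕ Fin r) K →ₐ[K] MvPowerSeries (Fin m ⊕ Fin r) K)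
    (hπ : ∀ (f : MvPowerSeries (Fin m ⊕ Fin r) K) (e : Fin m ⊕ Fin r →₀ ℕ),
      MvPowerSeries.coeff e (π f) =
        if ∀ i : Fin m, e (Sum.inl i) = 0 then MvPowerSeries.coeff e f else 0)
    (J : Ideal (MvPowerSeries (Fin m ⊕ Fin r) K)) (k : ℕ) :
    Module.Finite K
      (MvPowerSeries (Fin m ⊕ Fin r) K ⧸ (J ⊔ mIdl K (Fin m ⊕ Fin r) (k + 1))) ∧
    Module.Finite K
      (MvPowerSeries (Fin m ⊕ Fin r) K ⧸
        (Ideal.span (⇑π '' (J : Set (MvPowerSeries (Fin m ⊕ Fin r) K))) ⊔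
          mIdl K (Fin m ⊕ Fin r) (k + 1))) ∧
    Module.finrank K
      (MvPowerSeries (Fin m ⊕ Fin r) K ⧸ (J ⊔ mIdl K (Fin m ⊕ Fin r) (k + 1)))
      ≤ Module.finrank K
        (MvPowerSeries (Fin m ⊕ Fin r) K ⧸
          (Ideal.span (⇑π '' (J : Set (MvPowerSeries (Fin m ⊕ Fin r) K))) ⊔
            mIdl K (Fin m ⊕ Fin r) (k + 1))) := by
  have := finite_exp (Fin m ⊕ Fin r) k
  obtain ⟨E⟩ := quot_equiv K (Fin m ⊕ Fin r) k J
  obtain ⟨E0⟩ := quot_equiv K (Fin m ⊕ Fin r) k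
    (Ideal.span (⇑π '' (J : Set (MvPowerSeries (Fin m ⊕ Fin r) K))))
  refine ⟨Module.Finite.equiv E.symm, Module.Finite.equiv E0.symm, ?_⟩
  rw [E.finrank_eq, E0.finrank_eq]
  have hle := filt_le ((J.restrictScalars K).map (trunk K (Fin m ⊕ Fin r) k))
    (((Ideal.span (⇑π '' (J : Set (MvPowerSeries (Fin m ⊕ Fin r) K)))).restrictScalars K).map
      (trunk K (Fin m ⊕ Fin r) k)) (uFilt K m r k)
    (fun d v hv e he => hv e (by omega)) (k + 1)
    (by
      rw [eq_top_iff]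
      intro v _ e he
      exact absurd he (Nat.not_lt_zero _))
    (by
      rw [eq_bot_iff]
      intro v hv
      rw [Submodule.mem_bot]
      funext e
      exact hv e (Nat.lt_succ_iff.2 ((uDeg_le e.1).trans e.2)))
    (by
      rintro d _ ⟨h, hh, rfl⟩ hd
      obtain ⟨f, hf, hf1, hf2⟩ := key_lift π hπ J d h hh
      refine ⟨_, ⟨f, hf, rfl⟩, fun e he => hf1 _ he, fun e he => ?_⟩
      rw [Pi.sub_apply, trunk_apply, trunk_apply]
      rcases Nat.lt_succ_iff_lt_or_eq.1 he with h1 | h1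
      · have h2 := hd e h1
        rw [trunk_apply] at h2
        rw [hf1 _ h1, h2, sub_zero]
      · rw [hf2 _ h1, sub_self])
  have a := Submodule.finrank_quotient_add_finrank
    ((J.restrictScalars K).map (trunk K (Fin m ⊕ Fin r) k))
  have b := Submodule.finrank_quotient_add_finrank
    (((Ideal.span (⇑π '' (J : Set (MvPowerSeries (Fin m ⊕ Fin r) K)))).restrictScalars K).map
      (trunk K (Fin m ⊕ Fin r) k))
  omega
end

section
/- Let K be a field, n ∈ ℕ, R = K[[X_1,…,X_n]], and let N be any set of exponents α ∈ ℕ^n. Let R^N := {f ∈ R : the coefficient of f at α vanishes for every α ∈ N}, a K-linear subspace of R, and let J be an ideal of R. Assume: (i) R = J + R^N, i.e., every f ∈ R can be written f = g + h with g ∈ J and h ∈ R^N; and (ii) for every k ∈ ℕ, the K-vector space R/(J + m_{k+1}) is finite-dimensional of dimension equal to the cardinality of the finite set {α ∈ ℕ^n : α ∉ N, |α| ≤ k}. Then: (a) J ∩ R^N = {0}, so R = J ⊕ R^N as K-vector spaces; (b) for every k ∈ ℕ, R^N ∩ (J + m_{k+1}) = R^N ∩ m_{k+1}; and (c) if f =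 g + h with g ∈ J and h ∈ R^N, and every coefficient of f at exponents of total degree < k vanishes, then the same holds for g and for h. -/
/-- `R^N`: the `K`-linear subspace of power series supported in the
complement of the set `N` of exponents. -/
def coSupported (K : Type*) [Field K] (σ : Type*) (N : Set (σ →₀ ℕ)) :
    Submodule K (MvPowerSeries σ K) where
  carrier := {f | ∀ α ∈ N, MvPowerSeries.coeff α f = 0}
  add_mem' := by
    intro a b ha hb α hα
    simp only [Set.mem_setOf_eq] at *
    rw [map_add, ha α hα, hb α hα, add_zero]
  zero_mem' := by
    intro α _
    simp
  smul_mem' := by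
    intro c f hf α hα
    simp only [Set.mem_setOf_eq] at *
    rw [map_smul, hf α hα, smul_zero]

lemma expDegree_finite_aux {n : ℕ} (N : Set (Fin n →₀ ℕ)) (k : ℕ) :
    {α : Fin n →₀ ℕ | α ∉ N ∧ expDegree α ≤ k}.Finite := by
  refine (Set.finite_Iic (Finsupp.equivFunOnFinite.symm (fun _ : Fin n => k))).subset ?_
  rintro α ⟨-, hα⟩ i
  have h1 : expDegree α = ∑ i, α i := Finsupp.sum_fintype _ _ (fun _ => rfl)
  have h2 : α i ≤ ∑ i, α i :=
    Finset.single_le_sum (f := fun i => α i) (fun _ _ => Nat.zero_le _) (Finset.mem_univ i)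
  change α i ≤ k
  omega

open Classical in
/-- Extension by zero of a family of coefficients. -/
noncomputable def extZeroAux (K : Type*) [Field K] {σ : Type*} (S : Set (σ →₀ ℕ)) :
    (S → K) →ₗ[K] MvPowerSeries σ K where
  toFun c := fun α => if h : α ∈ S then c ⟨α, h⟩ else 0
  map_add' a b := by
    funext α
    change _ = (if h : α ∈ S then a ⟨α, h⟩ else 0) + (if h : α ∈ S then b ⟨α, h⟩ else 0)
    by_cases h : α ∈ S <;> simp [h]
  map_smul' r a := by
    funext α
    change _ = r * (if h : α ∈ S then a ⟨α, h⟩ else 0)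
    by_cases h : α ∈ S <;> simp [h]

lemma coeff_extZeroAux_mem {K : Type*} [Field K] {σ : Type*} (S : Set (σ →₀ ℕ)) (c : S → K)
    (α : σ →₀ ℕ) (h : α ∈ S) : MvPowerSeries.coeff α (extZeroAux K S c) = c ⟨α, h⟩ :=
  dif_pos h

lemma coeff_extZeroAux_notMem {K : Type*} [Field K] {σ : Type*} (S : Set (σ →₀ ℕ)) (c : S → K)
    (α : σ →₀ ℕ) (h : α ∉ S) : MvPowerSeries.coeff α (extZeroAux K S c) = 0 :=
  dif_neg h

lemma sub_ext_mem_aux {K : Type*} [Field K] {n : ℕ} (N : Set (Fin n →₀ ℕ)) (k : ℕ)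
    (f : MvPowerSeries (Fin n) K) (hf : f ∈ coSupported K (Fin n) N) :
    f - extZeroAux K {α : Fin n →₀ ℕ | α ∉ N ∧ expDegree α ≤ k}
      (fun α => MvPowerSeries.coeff α.1 f) ∈ mIdl K (Fin n) (k + 1) := by
  intro e he
  rw [map_sub]
  by_cases h : e ∈ N
  · rw [coeff_extZeroAux_notMem _ _ _ (fun h' => h'.1 h), hf e h, sub_zero]
  · have h' : e ∈ {α : Fin n →₀ ℕ | α ∉ N ∧ expDegree α ≤ k} := ⟨h, by omega⟩
    rw [coeff_extZeroAux_mem _ _ e h', sub_self]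

lemma key_aux {K : Type*} [Field K] {n : ℕ}
    (N : Set (Fin n →₀ ℕ)) (J : Ideal (MvPowerSeries (Fin n) K))
    (hsum : ∀ f : MvPowerSeries (Fin n) K,
      ∃ g ∈ J, ∃ h ∈ coSupported K (Fin n) N, f = g + h) (k : ℕ)
    (hfin : Module.Finite K (MvPowerSeries (Fin n) K ⧸ (J ⊔ mIdl K (Fin n) (k + 1))))
    (hdim : Module.finrank K
          (MvPowerSeries (Fin n) K ⧸ (J ⊔ mIdl K (Fin n) (k + 1)))
        = Set.ncard {α : Fin n →₀ ℕ | α ∉ N ∧ expDegree α ≤ k})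
    (f : MvPowerSeries (Fin n) K) (hf : f ∈ coSupported K (Fin n) N)
    (hfJ : f ∈ J ⊔ mIdl K (Fin n) (k + 1)) : f ∈ mIdl K (Fin n) (k + 1) := by
  have hd := fun f hf => sub_ext_mem_aux (K := K) N k f hf
  set S := {α : Fin n →₀ ℕ | α ∉ N ∧ expDegree α ≤ k} with hS
  have hSf : S.Finite := expDegree_finite_aux N k
  haveI : Fintype S := hSf.fintype
  let φ : (S → K) →ₗ[K] (MvPowerSeries (Fin n) K ⧸ (J ⊔ mIdl K (Fin n) (k + 1))) :=
    (Ideal.Quotient.mkₐ K (J ⊔ mIdl K (Fin n) (k + 1))).toLinearMap ∘ₗ extZeroAux K S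
  have hφ : ∀ c, φ c = Ideal.Quotient.mk _ (extZeroAux K S c) := fun _ => rfl
  have hsurj : Function.Surjective φ := by
    intro q
    obtain ⟨p, rfl⟩ := Ideal.Quotient.mk_surjective q
    obtain ⟨g, hg, h, hh, rfl⟩ := hsum p
    refine ⟨fun α => MvPowerSeries.coeff α.1 h, ?_⟩
    rw [hφ, eq_comm, Ideal.Quotient.eq, add_sub_assoc]
    exact add_mem (Ideal.mem_sup_left hg) (Ideal.mem_sup_right (hd h hh))
  have hfr : Module.finrank K (S → K) = Module.finrank K
      (MvPowerSeries (Fin n) K ⧸ (J ⊔ mIdl K (Fin n) (k + 1))) := by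
    rw [hdim, Module.finrank_fintype_fun_eq_card, ← Nat.card_eq_fintype_card,
      Nat.card_coe_set_eq]
  have hinj : Function.Injective φ :=
    (LinearMap.injective_iff_surjective_of_finrank_eq_finrank hfr).2 hsurj
  have h0 : φ (fun α => MvPowerSeries.coeff α.1 f) = 0 := by
    rw [hφ, Ideal.Quotient.eq_zero_iff_mem]
    have := sub_mem hfJ (Ideal.mem_sup_right (hd f hf) : _ ∈ J ⊔ mIdl K (Fin n) (k + 1))
    rwa [sub_sub_cancel] at this
  have hc := hinj (h0.trans (map_zero φ).symm)
  have := hd f hf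
  rwa [hc, map_zero, sub_zero] at this

/-- **The Claim in the proof of Theorem 6.18 (Bierstone–Milman,
"Desingularization algorithms I").**
If `R = J + R^N` and, for every `k`, `R/(J + m^{k+1})` has dimension
`#{α ∉ N : |α| ≤ k}`, then (a) `J ∩ R^N = 0` (so `R = J ⊕ R^N`);
(b) `R^N ∩ (J + m^{k+1}) = R^N ∩ m^{k+1}` for every `k`; and (c) if
`f = g + h` with `g ∈ J`, `h ∈ R^N` and `f` has order `≥ k`, then so do
`g` and `h`. -/
theorem stmt_13 {K : Type*} [Field K] {n : ℕ}
    (N : Set (Fin n →₀ ℕ)) (J : Ideal (MvPowerSeries (Fin n) K))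
    (hsum : ∀ f : MvPowerSeries (Fin n) K,
      ∃ g ∈ J, ∃ h ∈ coSupported K (Fin n) N, f = g + h)
    (hdim : ∀ k : ℕ,
      Module.Finite K (MvPowerSeries (Fin n) K ⧸ (J ⊔ mIdl K (Fin n) (k + 1))) ∧
      Module.finrank K
          (MvPowerSeries (Fin n) K ⧸ (J ⊔ mIdl K (Fin n) (k + 1)))
        = Set.ncard {α : Fin n →₀ ℕ | α ∉ N ∧ expDegree α ≤ k}) :
    (∀ f : MvPowerSeries (Fin n) K,
      f ∈ J → f ∈ coSupported K (Fin n) N → f = 0) ∧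
    (∀ k : ℕ, ∀ f ∈ coSupported K (Fin n) N,
      (f ∈ J ⊔ mIdl K (Fin n) (k + 1) ↔ f ∈ mIdl K (Fin n) (k + 1))) ∧
    (∀ (k : ℕ) (f g h : MvPowerSeries (Fin n) K), g ∈ J →
      h ∈ coSupported K (Fin n) N → f = g + h → f ∈ mIdl K (Fin n) k →
      g ∈ mIdl K (Fin n) k ∧ h ∈ mIdl K (Fin n) k) := by
  have key := fun k => key_aux N J hsum k (hdim k).1 (hdim k).2
  refine ⟨fun f hJ hN => ?_, fun k f hf => ⟨key k f hf, fun h => Ideal.mem_sup_right h⟩, ?_⟩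
  · ext e
    exact key (expDegree e) f hN (Ideal.mem_sup_left hJ) e (Nat.lt_succ_self _)
  · intro k f g h hg hh hfgh hf
    have hhm : h ∈ mIdl K (Fin n) k := by
      cases k with
      | zero => exact fun e he => absurd he (Nat.not_lt_zero _)
      | succ k =>
        refine key k h hh ?_
        have : h = f - g := by rw [hfgh, add_sub_cancel_left]
        rw [this]
        exact sub_mem (Ideal.mem_sup_right hf) (Ideal.mem_sup_left hg)
    refine ⟨?_, hhm⟩
    have : g = f - h := by rw [hfgh, add_sub_cancel_right]
    rw [this]
    exact sub_mem hf hhm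
end

section
/- Let K be a field and R = K[[u_1,…,u_m, v_1,…,v_r]] (n = m + r variables). Order the exponents δ ∈ ℕ^n by: δ < δ' iff |δ| < |δ'|, or |δ| = |δ'| and δ precedes δ' in the lexicographic order on coordinates taken in the order u_1,…,u_m, v_1,…,v_r (a smaller entry at the first differing coordinate meaning smaller); this is a well-order on ℕ^n. For nonzero f ∈ R, let exp(f) be the smallest element of the support of f under this order, and for an ideal J of R let 𝔑(J) := {exp(f) : f ∈ J, f ≠ 0} (the diagram of initial exponents of J). Let π : R → R be the K-algebra endomorphism setting u = 0 (the coefficient of π(f) at (β,γ) equals the coefficient of f at (0,γ) if β = 0, and 0 otherwise), let J be an ideal of R, and let J_0 be the ideal generated by {π(f) : f ∈ J}. If dim_K R/(J + m_{k+1}) = dim_K R/(J_0 + m_{k+1}) for every k ∈ ℕ (equality of Hilbert–Samuel functions), then 𝔑(J) = 𝔑(J_0). -/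
/-- Enumeration of the variables of `K[[u₁,…,u_m, v₁,…,v_r]]` in the
order `u₁,…,u_m, v₁,…,v_r`. -/
def idxNum {m r : ℕ} : Fin m ⊕ Fin r → ℕ
  | Sum.inl i => (i : ℕ)
  | Sum.inr j => m + (j : ℕ)

/-- The order on exponents: `δ < δ'` iff `|δ| < |δ'|`, or `|δ| = |δ'|`
and `δ` precedes `δ'` lexicographically in the coordinate order
`u₁,…,u_m, v₁,…,v_r` (a smaller entry at the first differing coordinate
meaning smaller). -/
def expLt {m r : ℕ} (δ δ' : Fin m ⊕ Fin r →₀ ℕ) : Prop :=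
  expDegree δ < expDegree δ' ∨
    (expDegree δ = expDegree δ' ∧
      ∃ j : Fin m ⊕ Fin r, δ j < δ' j ∧
        ∀ j' : Fin m ⊕ Fin r, idxNum j' < idxNum j → δ j' = δ' j')

/-- `e = exp(f)`: `e` is the smallest element of the support of `f`
under the order `expLt`. -/
def isInitExp {K : Type*} [Field K] {m r : ℕ}
    (f : MvPowerSeries (Fin m ⊕ Fin r) K) (e : Fin m ⊕ Fin r →₀ ℕ) : Prop :=
  MvPowerSeries.coeff e f ≠ 0 ∧
    ∀ e' : Fin m ⊕ Fin r →₀ ℕ, MvPowerSeries.coeff e' f ≠ 0 →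
      e' = e ∨ expLt e e'

/-- `𝔑(J)`: the diagram of initial exponents of the ideal `J`. -/
def diagram {K : Type*} [Field K] {m r : ℕ}
    (J : Ideal (MvPowerSeries (Fin m ⊕ Fin r) K)) :
    Set (Fin m ⊕ Fin r →₀ ℕ) :=
  {e | ∃ f ∈ J, f ≠ 0 ∧ isInitExp f e}

namespace HS15

/-- Initial index set of a subspace with respect to a key. -/
def inSet {K ι α : Type*} [Field K] [LinearOrder α] (key : ι → α)
    (V : Submodule K (ι → K)) : Set ι :=
  {i | ∃ f ∈ V, f i ≠ 0 ∧ ∀ j, key j < key i → f j = 0}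

theorem finrank_eq_inSet {K ι α : Type*} [Field K] [Finite ι] [LinearOrder α] (key : ι → α)
    (hkey : Function.Injective key) (V : Submodule K (ι → K)) :
    Module.finrank K V = (inSet key V).ncard := by
  classical
  haveI := Fintype.ofFinite ι
  apply le_antisymm
  · -- restriction is injective
    let ρ : V →ₗ[K] (inSet key V → K) :=
      (LinearMap.funLeft K K (Subtype.val : inSet key V → ι)).comp V.subtype
    have hinj : Function.Injective ρ := by
      rw [← LinearMap.ker_eq_bot, LinearMap.ker_eq_bot']
      intro f hf
      by_contra hne
      have hne' : ∃ i, f.1 i ≠ 0 := by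
        by_contra! h
        exact hne (Subtype.ext (funext h))
      obtain ⟨i, hi, hmin⟩ := (Finset.univ.filter fun i => f.1 i ≠ 0).exists_min_image key
        (by obtain ⟨i, hi⟩ := hne'; exact ⟨i, by simpa using hi⟩)
      simp only [Finset.mem_filter, Finset.mem_univ, true_and] at hi hmin
      have hmem : i ∈ inSet key V := ⟨f.1, f.2, hi, fun j hj => by
        by_contra h
        exact absurd (hmin j h) (not_le.mpr hj)⟩
      exact hi (congrFun hf ⟨i, hmem⟩)
    have := LinearMap.finrank_le_finrank_of_injective hinj
    rwa [Module.finrank_pi, ← Nat.card_eq_fintype_card, Nat.card_coe_set_eq] at this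
  · choose! F hF1 hF2 hF3 using fun (i : ι) (hi : i ∈ inSet key V) => hi
    let w : inSet key V → V := fun i => ⟨F i, hF1 i i.2⟩
    have hli : LinearIndependent K w := by
      rw [Fintype.linearIndependent_iff]
      intro c hc
      by_contra! h
      obtain ⟨i, hi, hmin⟩ := (Finset.univ.filter fun i => c i ≠ 0).exists_min_image
        (fun i => key i.1) (by obtain ⟨i, hi⟩ := h; exact ⟨i, by simpa using hi⟩)
      simp only [Finset.mem_filter, Finset.mem_univ, true_and] at hi hmin
      have h1 := congrFun (congrArg Subtype.val hc) i.1
      simp only [AddSubmonoidClass.coe_finsetSum, Submodule.coe_smul, Finset.sum_apply,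
        Pi.smul_apply, smul_eq_mul, Submodule.coe_zero, Pi.zero_apply, w] at h1
      rw [Finset.sum_eq_single i] at h1
      · rcases mul_eq_zero.mp h1 with h2 | h2
        · exact hi h2
        · exact hF2 i i.2 h2
      · intro j _ hji
        by_cases hcj : c j = 0
        · simp [hcj]
        · have : key i.1 < key j.1 := lt_of_le_of_ne (hmin j hcj) (fun h => hji
            (Subtype.ext (hkey h).symm))
          rw [hF3 j j.2 i this, mul_zero]
      · simp
    have := hli.fintype_card_le_finrank
    rwa [← Nat.card_eq_fintype_card, Nat.card_coe_set_eq] at this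

theorem expDegree_add {σ : Type*} (a b : σ →₀ ℕ) :
    expDegree (a + b) = expDegree a + expDegree b :=
  Finsupp.sum_add_index' (fun _ => rfl) (fun _ _ _ => rfl)

theorem finite_deg {σ : Type*} [Finite σ] (k : ℕ) : {e : σ →₀ ℕ | expDegree e ≤ k}.Finite := by
  classical
  haveI := Fintype.ofFinite σ
  refine (Set.finite_Icc (0 : σ →₀ ℕ) (Finsupp.equivFunOnFinite.symm fun _ => k)).subset ?_
  intro e he
  refine ⟨zero_le, fun i => ?_⟩
  have h1 : e i ≤ expDegree e := by
    unfold expDegree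
    rw [Finsupp.sum_fintype _ _ (fun _ => rfl)]
    exact Finset.single_le_sum (f := fun i => e i) (fun _ _ => Nat.zero_le _) (Finset.mem_univ i)
  exact h1.trans he

/-- initial exponents of degree at most `k`, modulo terms of degree more than `k`. -/
def inExp {K σ α : Type*} [Field K] [LinearOrder α] (key : (σ →₀ ℕ) → α)
    (J : Ideal (MvPowerSeries σ K)) (k : ℕ) : Set (σ →₀ ℕ) :=
  {e | expDegree e ≤ k ∧ ∃ f ∈ J, MvPowerSeries.coeff e f ≠ 0 ∧
    ∀ e', expDegree e' ≤ k → key e' < key e → MvPowerSeries.coeff e' f = 0}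

theorem finrank_add_inExp {K σ α : Type*} [Field K] [Finite σ] [LinearOrder α]
    (key : (σ →₀ ℕ) → α) (hkey : Function.Injective key)
    (J : Ideal (MvPowerSeries σ K)) (k : ℕ) :
    Module.finrank K (MvPowerSeries σ K ⧸ (J ⊔ mIdl K σ (k + 1))) + (inExp key J k).ncard =
      {e : σ →₀ ℕ | expDegree e ≤ k}.ncard := by
  classical
  let ι := {e : σ →₀ ℕ // expDegree e ≤ k}
  haveI : Finite ι := (finite_deg (σ := σ) k)
  haveI := Fintype.ofFinite ι
  let ρ : MvPowerSeries σ K →ₗ[K] (ι → K) :=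
    LinearMap.pi fun e => MvPowerSeries.coeff e.1
  have hρ : ∀ f (e : ι), ρ f e = MvPowerSeries.coeff e.1 f := fun f e => rfl
  have hsurj : Function.Surjective ρ := by
    intro x
    refine ⟨fun e => if h : expDegree e ≤ k then x ⟨e, h⟩ else 0, ?_⟩
    funext e
    change (if h : expDegree e.1 ≤ k then x ⟨e.1, h⟩ else 0) = x e
    rw [dif_pos e.2]
  let W : Submodule K (ι → K) := (J.restrictScalars K).map ρ
  have hker : LinearMap.ker (W.mkQ.comp ρ) = (J ⊔ mIdl K σ (k + 1)).restrictScalars K := by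
    ext f
    simp only [LinearMap.mem_ker, LinearMap.comp_apply, Submodule.mkQ_apply,
      Submodule.Quotient.mk_eq_zero, Submodule.restrictScalars_mem]
    rw [Submodule.mem_sup]
    constructor
    · rintro ⟨g, hg, hgf⟩
      refine ⟨g, hg, f - g, ?_, by ring⟩
      intro e he
      have := congrFun hgf ⟨e, by omega⟩
      rw [hρ, hρ] at this
      rw [map_sub, this, sub_self]
    · rintro ⟨g, hg, h, hh, rfl⟩
      refine ⟨g, hg, ?_⟩
      funext e
      rw [hρ, hρ, map_add, hh e.1 (by have := e.2; omega), add_zero]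
  have e1 : Module.finrank K (MvPowerSeries σ K ⧸ (J ⊔ mIdl K σ (k + 1))) =
      Module.finrank K ((ι → K) ⧸ W) := by
    have E1 := Submodule.Quotient.restrictScalarsEquiv K (J ⊔ mIdl K σ (k + 1))
    have E2 := Submodule.quotEquivOfEq _ _ hker
    have E3 := (W.mkQ.comp ρ).quotKerEquivOfSurjective
      (by rw [LinearMap.coe_comp]; exact W.mkQ_surjective.comp hsurj)
    exact (E1.symm.trans (E2.symm.trans E3)).finrank_eq
  have e2 : inExp key J k = Subtype.val '' (inSet (fun e : ι => key e.1) W) := by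
    ext e
    constructor
    · rintro ⟨he, f, hf, h1, h2⟩
      exact ⟨⟨e, he⟩, ⟨ρ f, ⟨f, hf, rfl⟩, h1, fun j hj => h2 j.1 j.2 hj⟩, rfl⟩
    · rintro ⟨e, ⟨_, ⟨f, hf, rfl⟩, h1, h2⟩, rfl⟩
      exact ⟨e.2, f, hf, h1, fun e' he' hlt => h2 ⟨e', he'⟩ hlt⟩
  have e3 := finrank_eq_inSet (fun e : ι => key e.1)
    (hkey.comp Subtype.val_injective) W
  rw [e1, e2, Set.ncard_image_of_injective _ Subtype.val_injective, ← e3,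
    Submodule.finrank_quotient_add_finrank, Module.finrank_pi, ← Nat.card_eq_fintype_card]
  exact Nat.card_coe_set_eq _

variable {m r : ℕ}

/-- key of the paper's order. -/
def key1 (e : Fin m ⊕ Fin r →₀ ℕ) : ℕ ×ₗ Lex (Fin (m + r) → ℕ) :=
  toLex (expDegree e, toLex fun i => e (finSumFinEquiv.symm i))

/-- key of the auxiliary order: first lexicographic in the `u` variables. -/
def key2 (e : Fin m ⊕ Fin r →₀ ℕ) : Lex (Fin m → ℕ) ×ₗ (ℕ ×ₗ Lex (Fin (m + r) → ℕ)) :=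
  toLex (toLex fun i => e (Sum.inl i), key1 e)

theorem key1_inj : Function.Injective (key1 (m := m) (r := r)) := by
  intro a b h
  have h2 := congrArg (fun x => ofLex (ofLex x).2) h
  ext j
  have := congrFun h2 (finSumFinEquiv j)
  simpa [key1] using this

theorem key2_inj : Function.Injective (key2 (m := m) (r := r)) := by
  intro a b h
  exact key1_inj (congrArg (fun x => (ofLex x).2) h)

theorem idxNum_eq (j : Fin m ⊕ Fin r) : idxNum j = (finSumFinEquiv j : ℕ) := by
  cases j <;> simp [idxNum]

theorem expLt_iff (a b : Fin m ⊕ Fin r →₀ ℕ) : expLt a b ↔ key1 a < key1 b := by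
  unfold key1 expLt
  rw [Prod.Lex.toLex_lt_toLex]
  refine or_congr Iff.rfl (and_congr Iff.rfl ?_)
  constructor
  · rintro ⟨j, hj, h⟩
    refine ⟨finSumFinEquiv j, fun i hi => ?_, by simpa using hj⟩
    apply h
    rw [idxNum_eq, idxNum_eq, Equiv.apply_symm_apply]
    exact hi
  · rintro ⟨i, h, hi⟩
    refine ⟨finSumFinEquiv.symm i, hi, fun j' hj' => ?_⟩
    rw [idxNum_eq, idxNum_eq, Equiv.apply_symm_apply] at hj'
    simpa using h (finSumFinEquiv j') hj'

theorem key1_of_key2 {a b : Fin m ⊕ Fin r →₀ ℕ} (hdeg : expDegree a = expDegree b)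
    (h : key2 a < key2 b) : key1 a < key1 b := by
  rcases (Prod.Lex.toLex_lt_toLex.mp h) with h | ⟨_, h⟩
  · obtain ⟨i, h1, h2⟩ := h
    rw [← expLt_iff]
    refine Or.inr ⟨hdeg, Sum.inl i, h2, fun j' hj' => ?_⟩
    cases j' with
    | inl j => exact h1 j hj'
    | inr j => simp only [idxNum] at hj'; omega
  · exact h

/-- the `u` part of an exponent. -/
noncomputable def uPart (e : Fin m ⊕ Fin r →₀ ℕ) : Fin m ⊕ Fin r →₀ ℕ :=
  Finsupp.equivFunOnFinite.symm (Sum.elim (fun i => e (Sum.inl i)) fun _ => 0)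

@[simp] theorem uPart_inl (e : Fin m ⊕ Fin r →₀ ℕ) (i) : uPart e (Sum.inl i) = e (Sum.inl i) := rfl
@[simp] theorem uPart_inr (e : Fin m ⊕ Fin r →₀ ℕ) (i) : uPart e (Sum.inr i) = 0 := rfl

theorem uPart_le (e : Fin m ⊕ Fin r →₀ ℕ) : uPart e ≤ e := by
  intro j; cases j <;> simp

variable {K : Type*} [Field K]

open Classical in
/-- coefficient of `u^b`, as a power series in `v`. -/
noncomputable def T (b : Fin m ⊕ Fin r →₀ ℕ) (g : MvPowerSeries (Fin m ⊕ Fin r) K) :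
    MvPowerSeries (Fin m ⊕ Fin r) K :=
  fun e => if ∀ i : Fin m, e (Sum.inl i) = 0 then MvPowerSeries.coeff (e + b) g else 0

open Classical in
theorem coeff_T (b : Fin m ⊕ Fin r →₀ ℕ) (g : MvPowerSeries (Fin m ⊕ Fin r) K) (e) :
    MvPowerSeries.coeff e (T b g) =
      if ∀ i : Fin m, e (Sum.inl i) = 0 then MvPowerSeries.coeff (e + b) g else 0 := rfl

theorem T_mul (π : MvPowerSeries (Fin m ⊕ Fin r) K →ₐ[K] MvPowerSeries (Fin m ⊕ Fin r) K)
    (hπ : ∀ (f : MvPowerSeries (Fin m ⊕ Fin r) K) (e : Fin m ⊕ Fin r →₀ ℕ),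
      MvPowerSeries.coeff e (π f) =
        if ∀ i : Fin m, e (Sum.inl i) = 0 then MvPowerSeries.coeff e f else 0)
    (b : Fin m ⊕ Fin r →₀ ℕ) (hb : ∀ j, b (Sum.inr j) = 0)
    (h f : MvPowerSeries (Fin m ⊕ Fin r) K) :
    T b (h * π f) = π (T b h * f) := by
  classical
  ext e
  rw [coeff_T, hπ]
  by_cases he : ∀ i : Fin m, e (Sum.inl i) = 0
  swap
  · simp [he]
  rw [if_pos he, if_pos he, MvPowerSeries.coeff_mul, MvPowerSeries.coeff_mul]
  symm
  refine Finset.sum_of_injOn (fun p => (p.1 + b, p.2)) ?_ ?_ ?_ ?_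
  · rintro ⟨p, q⟩ _ ⟨p', q'⟩ _ hpq
    simpa using hpq
  · rintro ⟨p, q⟩ hp
    simp only [Finset.mem_coe,
      Finset.HasAntidiagonal.mem_antidiagonal] at hp ⊢
    rw [← hp]; abel
  · rintro ⟨p, q⟩ hp hn
    rw [Finset.HasAntidiagonal.mem_antidiagonal] at hp
    simp only at hp ⊢
    rw [hπ]
    split_ifs with hq
    · exfalso
      apply hn
      have hle : b ≤ p := by
        intro j
        cases j with
        | inl i =>
          have := DFunLike.congr_fun hp (Sum.inl i)
          simp only [Finsupp.add_apply, hq, he] at this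
          omega
        | inr j => simp [hb]
      refine ⟨(p - b, q), ?_, by simp [tsub_add_cancel_of_le hle]⟩
      rw [Finset.mem_coe, Finset.HasAntidiagonal.mem_antidiagonal]
      apply add_right_cancel (b := b)
      rw [← hp, add_right_comm, tsub_add_cancel_of_le hle]
    · simp
  · rintro ⟨p, q⟩ hp
    rw [Finset.HasAntidiagonal.mem_antidiagonal] at hp
    simp only at hp ⊢
    have h0 : ∀ i : Fin m, p (Sum.inl i) = 0 ∧ q (Sum.inl i) = 0 := fun i => by
      have := DFunLike.congr_fun hp (Sum.inl i)
      simp only [Finsupp.add_apply, he] at this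
      omega
    rw [coeff_T, hπ, if_pos fun i => (h0 i).1, if_pos fun i => (h0 i).2]

theorem T_mem (π : MvPowerSeries (Fin m ⊕ Fin r) K →ₐ[K] MvPowerSeries (Fin m ⊕ Fin r) K)
    (hπ : ∀ (f : MvPowerSeries (Fin m ⊕ Fin r) K) (e : Fin m ⊕ Fin r →₀ ℕ),
      MvPowerSeries.coeff e (π f) =
        if ∀ i : Fin m, e (Sum.inl i) = 0 then MvPowerSeries.coeff e f else 0)
    (J : Ideal (MvPowerSeries (Fin m ⊕ Fin r) K))
    (b : Fin m ⊕ Fin r →₀ ℕ) (hb : ∀ j, b (Sum.inr j) = 0)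
    (g : MvPowerSeries (Fin m ⊕ Fin r) K)
    (hg : g ∈ Ideal.span (⇑π '' (J : Set (MvPowerSeries (Fin m ⊕ Fin r) K)))) :
    ∃ F ∈ J, π F = T b g := by
  classical
  suffices h : ∀ h, ∃ F ∈ J, π F = T b (h * g) by simpa using h 1
  refine Submodule.span_induction (p := fun g _ => ∀ h, ∃ F ∈ J, π F = T b (h * g))
    ?_ ?_ ?_ ?_ hg
  · rintro _ ⟨f, hf, rfl⟩ h
    exact ⟨T b h * f, J.mul_mem_left _ hf, (T_mul π hπ b hb h f).symm⟩
  · intro h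
    refine ⟨0, J.zero_mem, ?_⟩
    ext e
    simp [coeff_T]
  · intro x y _ _ hx hy h
    obtain ⟨F, hF, h1⟩ := hx h
    obtain ⟨G, hG, h2⟩ := hy h
    refine ⟨F + G, J.add_mem hF hG, ?_⟩
    rw [map_add, h1, h2, mul_add]
    ext e
    simp only [coeff_T, map_add]
    split_ifs <;> simp
  · intro a x _ hx h
    obtain ⟨F, hF, h1⟩ := hx (h * a)
    exact ⟨F, hF, by rw [h1, smul_eq_mul, mul_assoc]⟩

/-- Shape of an element `u^b * F` with `π F = T b g`. -/
theorem coeff_shift (π : MvPowerSeries (Fin m ⊕ Fin r) K →ₐ[K] MvPowerSeries (Fin m ⊕ Fin r) K)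
    (hπ : ∀ (f : MvPowerSeries (Fin m ⊕ Fin r) K) (e : Fin m ⊕ Fin r →₀ ℕ),
      MvPowerSeries.coeff e (π f) =
        if ∀ i : Fin m, e (Sum.inl i) = 0 then MvPowerSeries.coeff e f else 0)
    (e0 : Fin m ⊕ Fin r →₀ ℕ) (g F : MvPowerSeries (Fin m ⊕ Fin r) K)
    (hF : π F = T (uPart e0) g) (e : Fin m ⊕ Fin r →₀ ℕ)
    (he : ∀ i : Fin m, e (Sum.inl i) = e0 (Sum.inl i)) :
    uPart e0 ≤ e ∧ (∀ i : Fin m, (e - uPart e0) (Sum.inl i) = 0) ∧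
    MvPowerSeries.coeff (e - uPart e0) F = MvPowerSeries.coeff e g := by
  classical
  have hle : uPart e0 ≤ e := by
    intro j; cases j <;> simp [he]
  have hz : ∀ i : Fin m, (e - uPart e0) (Sum.inl i) = 0 := by
    intro i; simp [he]
  refine ⟨hle, hz, ?_⟩
  have h1 := hπ F (e - uPart e0)
  rw [hF, coeff_T, if_pos hz, if_pos hz, tsub_add_cancel_of_le hle] at h1
  exact h1.symm

theorem diagram_inter (J : Ideal (MvPowerSeries (Fin m ⊕ Fin r) K)) (k : ℕ) :
    inExp key1 J k = {e | expDegree e ≤ k ∧ e ∈ diagram J} := by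
  ext e
  refine and_congr_right fun he => ?_
  constructor
  · rintro ⟨f, hf, h1, h2⟩
    refine ⟨f, hf, fun h => h1 (by simp [h]), h1, fun e' he' => ?_⟩
    rw [expLt_iff]
    rcases lt_trichotomy (key1 e') (key1 e) with h | h | h
    · exfalso
      refine he' (h2 e' ?_ h)
      rw [← expLt_iff] at h
      rcases h with h | h <;> omega
    · exact Or.inl (key1_inj h)
    · exact Or.inr h
  · rintro ⟨f, hf, _, h1, h2⟩
    refine ⟨f, hf, h1, fun e' _ hlt => ?_⟩
    by_contra h
    rcases h2 e' h with rfl | h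
    · exact lt_irrefl _ hlt
    · rw [expLt_iff] at h
      exact lt_asymm h hlt

end HS15

/-- **Assertion (6.7) in the proof of Theorem 6.18 (Bierstone–Milman,
"Desingularization algorithms I").**
Let `π : R → R` be the `K`-algebra endomorphism of
`R = K[[u₁,…,u_m, v₁,…,v_r]]` setting `u = 0`, `J` an ideal and `J₀` the
ideal generated by `π(J)`.  If the Hilbert–Samuel functions agree,
`dim_K R/(J + m^{k+1}) = dim_K R/(J₀ + m^{k+1})` for every `k`, then the
diagrams of initial exponents agree: `𝔑(J) = 𝔑(J₀)`. -/
theorem stmt_15 {K : Type*} [Field K] {m r : ℕ}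
    (π : MvPowerSeries (Fin m ⊕ Fin r) K →ₐ[K] MvPowerSeries (Fin m ⊕ Fin r) K)
    (hπ : ∀ (f : MvPowerSeries (Fin m ⊕ Fin r) K) (e : Fin m ⊕ Fin r →₀ ℕ),
      MvPowerSeries.coeff e (π f) =
        if ∀ i : Fin m, e (Sum.inl i) = 0 then MvPowerSeries.coeff e f else 0)
    (J : Ideal (MvPowerSeries (Fin m ⊕ Fin r) K))
    (hfin : ∀ k : ℕ, Module.Finite K
      (MvPowerSeries (Fin m ⊕ Fin r) K ⧸ (J ⊔ mIdl K (Fin m ⊕ Fin r) (k + 1))))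
    (hfin₀ : ∀ k : ℕ, Module.Finite K
      (MvPowerSeries (Fin m ⊕ Fin r) K ⧸
        (Ideal.span (⇑π '' (J : Set (MvPowerSeries (Fin m ⊕ Fin r) K))) ⊔
          mIdl K (Fin m ⊕ Fin r) (k + 1))))
    (hdim : ∀ k : ℕ,
      Module.finrank K
        (MvPowerSeries (Fin m ⊕ Fin r) K ⧸ (J ⊔ mIdl K (Fin m ⊕ Fin r) (k + 1)))
      = Module.finrank K
        (MvPowerSeries (Fin m ⊕ Fin r) K ⧸
          (Ideal.span (⇑π '' (J : Set (MvPowerSeries (Fin m ⊕ Fin r) K))) ⊔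
            mIdl K (Fin m ⊕ Fin r) (k + 1)))) :
    diagram J =
      diagram (Ideal.span (⇑π '' (J : Set (MvPowerSeries (Fin m ⊕ Fin r) K)))) := by
  classical
  set J₀ := Ideal.span (⇑π '' (J : Set (MvPowerSeries (Fin m ⊕ Fin r) K))) with hJ₀
  have hcard : ∀ {α : Type} [LinearOrder α] (key : (Fin m ⊕ Fin r →₀ ℕ) → α),
      Function.Injective key → ∀ k,
      (HS15.inExp key J k).ncard = (HS15.inExp key J₀ k).ncard := by
    intro α _ key hkey k
    have h1 := HS15.finrank_add_inExp key hkey J k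
    have h2 := HS15.finrank_add_inExp key hkey J₀ k
    have h3 := hdim k
    omega
  have hfinE : ∀ {α : Type} [LinearOrder α] (key : (Fin m ⊕ Fin r →₀ ℕ) → α)
      (I : Ideal (MvPowerSeries (Fin m ⊕ Fin r) K)) (k : ℕ), (HS15.inExp key I k).Finite := by
    intro α _ key I k
    exact (HS15.finite_deg k).subset fun e he => he.1
  -- the auxiliary order
  have hsub2 : ∀ k, HS15.inExp HS15.key2 J₀ k ⊆ HS15.inExp HS15.key2 J k := by
    rintro k e0 ⟨hd, g, hg, h1, h2⟩
    obtain ⟨F, hFJ, hF⟩ := HS15.T_mem π hπ J (HS15.uPart e0) (fun _ => rfl) g hg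
    refine ⟨hd, MvPowerSeries.monomial (HS15.uPart e0) 1 * F, J.mul_mem_left _ hFJ, ?_, ?_⟩
    · obtain ⟨hle, _, hc⟩ := HS15.coeff_shift π hπ e0 g F hF e0 (fun _ => rfl)
      rw [MvPowerSeries.coeff_monomial_mul, if_pos hle, one_mul, hc]
      exact h1
    · intro e' hd' hlt
      rw [MvPowerSeries.coeff_monomial_mul]
      split_ifs with hle
      · have hβ : ∀ i : Fin m, e' (Sum.inl i) = e0 (Sum.inl i) := by
          have hle1 : toLex (fun i : Fin m => e0 (Sum.inl i)) ≤
              toLex (fun i : Fin m => e' (Sum.inl i)) :=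
            Pi.toLex_monotone fun i => hle (Sum.inl i)
          rcases (Prod.Lex.toLex_lt_toLex.mp hlt) with h | ⟨h, _⟩
          · exact absurd hle1 (not_le.mpr h)
          · exact fun i => congrFun h i
        rw [one_mul, (HS15.coeff_shift π hπ e0 g F hF e' hβ).2.2]
        exact h2 e' hd' hlt
      · rfl
  have heq2 : ∀ k, HS15.inExp HS15.key2 J₀ k = HS15.inExp HS15.key2 J k := fun k =>
    Set.eq_of_subset_of_ncard_le (hsub2 k) (hcard HS15.key2 HS15.key2_inj k).le
      (hfinE _ _ _)
  have hsub : diagram J ⊆ diagram J₀ := by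
    rintro e0 ⟨f, hf, _, h1, h2⟩
    have hmem : e0 ∈ HS15.inExp HS15.key2 J (expDegree e0) := by
      refine ⟨le_rfl, f, hf, h1, fun e' hd' hlt => ?_⟩
      by_contra hne
      rcases h2 e' hne with rfl | h
      · exact lt_irrefl _ hlt
      · have hdeg : expDegree e' = expDegree e0 := by
          rcases h with h | h <;> omega
        rw [HS15.expLt_iff] at h
        exact lt_asymm h (HS15.key1_of_key2 hdeg hlt)
    rw [← heq2] at hmem
    obtain ⟨_, g, hg, hg1, hg2⟩ := hmem
    obtain ⟨F, hFJ, hF⟩ := HS15.T_mem π hπ J (HS15.uPart e0) (fun _ => rfl) g hg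
    have hc0 : MvPowerSeries.coeff e0 (MvPowerSeries.monomial (HS15.uPart e0) 1 * π F) ≠ 0 := by
      obtain ⟨hle, hz, hc⟩ := HS15.coeff_shift π hπ e0 g F hF e0 (fun _ => rfl)
      rw [MvPowerSeries.coeff_monomial_mul, if_pos hle, one_mul, hπ, if_pos hz, hc]
      exact hg1
    refine ⟨MvPowerSeries.monomial (HS15.uPart e0) 1 * π F,
      J₀.mul_mem_left _ (Ideal.subset_span ⟨F, hFJ, rfl⟩),
      fun h => hc0 (by rw [h, map_zero]), hc0, fun e' he' => ?_⟩
    rw [MvPowerSeries.coeff_monomial_mul] at he'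
    split_ifs at he' with hle
    swap
    · exact absurd rfl he'
    rw [one_mul, hπ] at he'
    split_ifs at he' with hz
    swap
    · exact absurd rfl he'
    have hβ : ∀ i : Fin m, e' (Sum.inl i) = e0 (Sum.inl i) := by
      intro i
      have a1 := hz i
      have a2 := hle (Sum.inl i)
      simp only [Finsupp.tsub_apply, HS15.uPart_inl] at a1 a2
      omega
    rw [(HS15.coeff_shift π hπ e0 g F hF e' hβ).2.2] at he'
    by_cases hd : expDegree e' ≤ expDegree e0
    · have hnlt : ¬ HS15.key2 e' < HS15.key2 e0 := fun h => he' (hg2 e' hd h)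
      rcases lt_trichotomy (HS15.key1 e') (HS15.key1 e0) with h | h | h
      · exfalso
        apply hnlt
        refine Prod.Lex.toLex_lt_toLex.mpr (Or.inr ⟨?_, h⟩)
        exact congrArg toLex (funext hβ)
      · exact Or.inl (HS15.key1_inj h)
      · exact Or.inr ((HS15.expLt_iff _ _).mpr h)
    · exact Or.inr (Or.inl (not_le.mp hd))
  refine Set.Subset.antisymm hsub fun e he => ?_
  have hsub1 : HS15.inExp HS15.key1 J (expDegree e) ⊆ HS15.inExp HS15.key1 J₀ (expDegree e) := by
    rw [HS15.diagram_inter, HS15.diagram_inter]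
    exact fun x hx => ⟨hx.1, hsub hx.2⟩
  have heq1 := Set.eq_of_subset_of_ncard_le hsub1
    (hcard HS15.key1 HS15.key1_inj (expDegree e)).ge (hfinE _ _ _)
  rw [HS15.diagram_inter, HS15.diagram_inter] at heq1
  exact (heq1.ge (show e ∈ {x | expDegree x ≤ expDegree e ∧ x ∈ diagram J₀} from ⟨le_rfl, he⟩)).2
end
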